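/- There exist η ∈ [0,1) and constants 0 < c_G ≤ C_G such that for every μ ∈ [0, 1/7] there exist a symmetric positive definite matrix G ∈ ℝ^{6×6} with all eigenvalues in [c_G, C_G] and a vector γ = (γ0,…,γ6) ∈ ℝ⁷ such that for every real inner product space X, every sequence (yⁿ)_{n∈ℤ} in X, and every n: ⟪Dyⁿ + μ(3·Dyⁿ⁻¹ − 3·Dyⁿ⁻² + Dyⁿ⁻³), yⁿ − η·yⁿ⁻¹⟫ = ‖(yⁿ, yⁿ⁻¹, …, yⁿ⁻⁵)‖²_G − ‖(yⁿ⁻¹, yⁿ⁻², …, yⁿ⁻⁶)‖²_G + ‖Σ_{i=0}^{6} γ_i·yⁿ⁻ⁱ‖², where Dyᵐ := (11/6)yᵐ − 3yᵐ⁻¹ + (3/2)yᵐ⁻² − (1/3)yᵐ⁻³. (That is, the summation assumption holds for k = δ = 3 whenever the coupling strength ω ≤ 1/7.) -/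

import Mathlib

open scoped BigOperators RealInnerProductSpace

/-- The weighted "norm" `‖Y‖²_G = Σ_{i,j} G_{ij} ⟪y_i, y_j⟫` associated with a
matrix `G` and a tuple `Y` in a real inner product space. -/
noncomputable def gnormSq {X : Type*} [NormedAddCommGroup X] [InnerProductSpace ℝ X]
    {s : ℕ} (G : Matrix (Fin s) (Fin s) ℝ) (Y : Fin s → X) : ℝ :=
  ∑ i : Fin s, ∑ j : Fin s, G i j * ⟪Y i, Y j⟫

/-!
This is Dahlquist's G-stability argument. With `a(z)` the symbol of the scheme and
`b(z) = 1 - η z`, the real part of `a(z) b(z⁻¹)` on the unit circle is `q(cos θ)` for a polynomial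
`q` that is nonnegative on `[-1, 1]`. By Fejér–Riesz it equals `γ(z) γ(z⁻¹)`, where `γ` has all its
roots in the closed unit disc. Then `(a(z) b(w) + b(z) a(w)) / 2 - γ(z) γ(w)` vanishes for
`z w = 1`, and its quotient by `1 - z w` is the generating function of `G`; the factor `1 - z w`
produces the telescoping.

For positive definiteness, prolong a vector to a sequence with `yⁿ = η yⁿ⁻¹`: the `G`-norm of the
window then tends to `0` and drops by the square of the `γ`-sum at each step. If it is nonpositive
at the start, all these sums vanish, and then so does the vector, since neither the leading
coefficient of `γ` nor `∑ γ i * η ^ (d - i)` is zero, `1 / η` lying outside the disc of roots.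
The coefficients of `γ` are bounded, and these two quantities are bounded away from zero, uniformly
in `μ ∈ [0, 1 / 7]`. So all matrices `G` that arise lie in a compact set of positive definite ones,
which gives the uniform eigenvalue bounds.
-/

section DiagonalSums

open Finset Polynomial

/-- Partial sums along diagonals, `diagSum s i j = s i j + s (i - 1) (j - 1) + ⋯` down to the
border. As generating functions, `diagSum s` is `s` divided by `1 - z * w`. -/
def diagSum {M : Type*} [Add M] (s : ℕ → ℕ → M) : ℕ → ℕ → M
  | 0, j => s 0 j
  | i + 1, 0 => s (i + 1) 0
  | i + 1, j + 1 => diagSum s i j + s (i + 1) (j + 1)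

lemma diagSum_comm {M : Type*} [Add M] {s : ℕ → ℕ → M} (hs : ∀ i j, s i j = s j i) :
    ∀ i j, diagSum s i j = diagSum s j i
  | 0, 0 => rfl
  | 0, j + 1 => hs 0 (j + 1)
  | i + 1, 0 => hs (i + 1) 0
  | i + 1, j + 1 => congrArg₂ (· + ·) (diagSum_comm hs i j) (hs (i + 1) (j + 1))

lemma diagSum_add_right {M : Type*} [AddCommMonoid M] (s : ℕ → ℕ → M) (n m : ℕ) :
    diagSum s n (n + m) = ∑ k ∈ range (n + 1), s k (k + m) := by
  induction n with
  | zero => simp [diagSum]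
  | succ n ih => rw [sum_range_succ, ← ih, Nat.add_right_comm, diagSum]

lemma continuous_diagSum {T M : Type*} [TopologicalSpace T] [TopologicalSpace M] [Add M]
    [ContinuousAdd M] {s : T → ℕ → ℕ → M} (hs : ∀ i j, Continuous fun t ↦ s t i j) :
    ∀ i j, Continuous fun t ↦ diagSum (s t) i j
  | 0, j => hs 0 j
  | i + 1, 0 => hs (i + 1) 0
  | i + 1, j + 1 => (continuous_diagSum hs i j).add (hs (i + 1) (j + 1))

lemma sum_diagSum_mul_sub_sum_diagSum_mul_shift {R : Type*} [Ring R] {s : ℕ → ℕ → R} {d : ℕ}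
    (hrow : ∀ j ≤ d, diagSum s d j = 0) (hcol : ∀ i ≤ d, diagSum s i d = 0) (f : ℕ → ℕ → R) :
    ∑ i ∈ range d, ∑ j ∈ range d, diagSum s i j * f i j
        - ∑ i ∈ range d, ∑ j ∈ range d, diagSum s i j * f (i + 1) (j + 1)
      = ∑ i ∈ range (d + 1), ∑ j ∈ range (d + 1), s i j * f i j := by
  have extend : ∑ i ∈ range d, ∑ j ∈ range d, diagSum s i j * f i j
      = ∑ i ∈ range (d + 1), ∑ j ∈ range (d + 1), diagSum s i j * f i j := by
    rw [sum_range_succ, sum_eq_zero (s := range (d + 1)), add_zero]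
    · refine sum_congr rfl fun i hi ↦ ?_
      rw [sum_range_succ, hcol i (mem_range.mp hi).le, zero_mul, add_zero]
    · intro j hj
      rw [hrow j (Nat.lt_succ_iff.mp (mem_range.mp hj)), zero_mul]
  rw [extend]
  simp only [sum_range_succ', diagSum, add_mul, sum_add_distrib]
  abel

lemma coeff_mul_reflect {R : Type*} [Semiring R] (p q : R[X]) {n d : ℕ} (h : n ≤ d) :
    (p * reflect d q).coeff n = diagSum (fun i j ↦ p.coeff i * q.coeff j) n d := by
  obtain ⟨m, rfl⟩ := Nat.exists_eq_add_of_le h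
  rw [diagSum_add_right, coeff_mul,
    Nat.sum_antidiagonal_eq_sum_range_succ fun i j ↦ p.coeff i * (reflect (n + m) q).coeff j]
  refine sum_congr rfl fun k hk ↦ ?_
  have hk' : k ≤ n := Nat.lt_succ_iff.mp (mem_range.mp hk)
  rw [coeff_reflect, revAt_le (by lia), show n + m - (n - k) = k + m by lia]

lemma eval_reflect {F : Type*} [Field F] {p : F[X]} {d : ℕ} (hp : p.natDegree ≤ d) {z : F}
    (hz : z ≠ 0) : (reflect d p).eval z = z ^ d * p.eval z⁻¹ := by
  let := invertibleOfNonzero (inv_ne_zero hz)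
  have h := eval₂_reflect_mul_pow (RingHom.id F) z⁻¹ d p hp
  rw [invOf_eq_inv, inv_inv] at h
  rw [eval, eval, ← h, mul_comm, mul_assoc, ← mul_pow, inv_mul_cancel₀ hz, one_pow, mul_one]

end DiagonalSums

section GMatrix

open Finset

/-- The coefficients of the symmetric two-variable polynomial
`(a(z) b(w) + b(z) a(w)) / 2 - γ(z) γ(w)`. -/
noncomputable def spectralResidual (a b γ : ℕ → ℝ) (i j : ℕ) : ℝ :=
  (a i * b j + b i * a j) / 2 - γ i * γ j

/-- The identity `a(z) b(z⁻¹) + b(z) a(z⁻¹) = 2 γ(z) γ(z⁻¹)` for weights of degree at most `d`: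
`spectralResidual a b γ` sums to zero along each of its diagonals. -/
def SpectralIdentity (d : ℕ) (a b γ : ℕ → ℝ) : Prop :=
  ∀ n ≤ d, diagSum (spectralResidual a b γ) n d = 0

/-- Dahlquist's matrix `G`, whose generating function is that of `spectralResidual a b γ` divided by
`1 - z * w`; the quotient is a polynomial of degree below `d` in each variable when
`SpectralIdentity d a b γ` holds. -/
noncomputable def gMatrix (d : ℕ) (a b γ : ℕ → ℝ) : Matrix (Fin d) (Fin d) ℝ :=
  Matrix.of fun i j ↦ diagSum (spectralResidual a b γ) i j

variable {X : Type*} [NormedAddCommGroup X] [InnerProductSpace ℝ X] {d : ℕ} {a b γ : ℕ → ℝ}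

lemma spectralResidual_comm (a b γ : ℕ → ℝ) (i j : ℕ) :
    spectralResidual a b γ i j = spectralResidual a b γ j i := by
  unfold spectralResidual
  ring

lemma isHermitian_gMatrix (d : ℕ) (a b γ : ℕ → ℝ) : (gMatrix d a b γ).IsHermitian :=
  Matrix.IsHermitian.ext fun i j ↦ diagSum_comm (spectralResidual_comm a b γ) j i

lemma gnormSq_smul (G : Matrix (Fin d) (Fin d) ℝ) (c : ℝ) (Y : Fin d → X) :
    gnormSq G (c • Y) = c ^ 2 * gnormSq G Y := by
  simp only [gnormSq, mul_sum, Pi.smul_apply, real_inner_smul_left, real_inner_smul_right]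
  exact sum_congr rfl fun i _ ↦ sum_congr rfl fun j _ ↦ by ring

lemma gnormSq_real (G : Matrix (Fin d) (Fin d) ℝ) (v : Fin d → ℝ) :
    gnormSq G v = v ⬝ᵥ G.mulVec v := by
  simp only [gnormSq, dotProduct, Matrix.mulVec, mul_sum, RCLike.inner_apply]
  refine sum_congr rfl fun i _ ↦ sum_congr rfl fun j _ ↦ ?_
  simp only [conj_trivial]
  ring

lemma sum_spectralResidual_mul_inner (a b γ : ℕ → ℝ) (s : Finset ℕ) (y : ℕ → X) :
    ∑ i ∈ s, ∑ j ∈ s, spectralResidual a b γ i j * ⟪y i, y j⟫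
      = ⟪∑ i ∈ s, a i • y i, ∑ i ∈ s, b i • y i⟫ - ‖∑ i ∈ s, γ i • y i‖ ^ 2 := by
  have expand (p q : ℕ → ℝ) : ⟪∑ i ∈ s, p i • y i, ∑ i ∈ s, q i • y i⟫
      = ∑ i ∈ s, ∑ j ∈ s, p i * q j * ⟪y i, y j⟫ := by
    rw [sum_inner]
    refine sum_congr rfl fun i _ ↦ ?_
    rw [inner_sum]
    refine sum_congr rfl fun j _ ↦ ?_
    rw [real_inner_smul_left, real_inner_smul_right, mul_assoc]
  have symmetrize := expand b a
  rw [real_inner_comm] at symmetrize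
  rw [← real_inner_self_eq_norm_sq, expand γ γ, ← add_halves ⟪_, _⟫]
  nth_rw 1 [expand a b]
  rw [symmetrize]
  simp only [spectralResidual, sum_div, ← sum_add_distrib, ← sum_sub_distrib]
  exact sum_congr rfl fun i _ ↦ sum_congr rfl fun j _ ↦ by ring

theorem SpectralIdentity.inner_eq (h : SpectralIdentity d a b γ) (y : ℤ → X) (n : ℤ) :
    ⟪∑ i ∈ range (d + 1), a i • y (n - i), ∑ i ∈ range (d + 1), b i • y (n - i)⟫
      = gnormSq (gMatrix d a b γ) (fun i ↦ y (n - i))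
        - gnormSq (gMatrix d a b γ) (fun i ↦ y (n - 1 - i))
        + ‖∑ i ∈ range (d + 1), γ i • y (n - i)‖ ^ 2 := by
  have telescope := sum_diagSum_mul_sub_sum_diagSum_mul_shift
    (fun j hj ↦ (diagSum_comm (spectralResidual_comm a b γ) d j).trans (h j hj)) h
    fun i j ↦ ⟪y (n - i), y (n - j)⟫
  rw [sum_spectralResidual_mul_inner a b γ _ fun i : ℕ ↦ y (n - i)] at telescope
  have shift (i : ℕ) : n - (i + 1 : ℕ) = n - 1 - i := by push_cast; ring
  simp only [shift] at telescope
  simp only [gnormSq, gMatrix, Matrix.of_apply, Finset.sum_range] at telescope ⊢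
  linarith

section PosDef

variable {η : ℝ} {z : ℤ → ℝ}

lemma SpectralIdentity.gnormSq_eq_add_sq (h : SpectralIdentity d a b γ) {n : ℤ}
    (hz : ∑ i ∈ range (d + 1), b i * z (n - i) = 0) :
    gnormSq (gMatrix d a b γ) (fun i ↦ z (n - 1 - i))
      = gnormSq (gMatrix d a b γ) (fun i ↦ z (n - i))
        + (∑ i ∈ range (d + 1), γ i * z (n - i)) ^ 2 := by
  have := h.inner_eq z n
  simp only [smul_eq_mul, hz, inner_zero_right, Real.norm_eq_abs, sq_abs] at this
  linarith

lemma eq_pow_mul_of_forall_succ (hz : ∀ k : ℕ, z (k + 1) = η * z k) (k : ℕ) :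
    z k = η ^ k * z 0 := by
  induction k with
  | zero => simp
  | succ k ih => rw [Nat.cast_succ, hz, ih, pow_succ']; ring

lemma SpectralIdentity.sum_eq_zero_of_gnormSq_nonpos (h : SpectralIdentity d a b γ) (hη : |η| < 1)
    (hz : ∀ k : ℕ, z (k + 1) = η * z k)
    (hb : ∀ k : ℕ, ∑ i ∈ range (d + 1), b i * z (k + 1 - i) = 0)
    (hQ : gnormSq (gMatrix d a b γ) (fun i ↦ z (-i)) ≤ 0) {k : ℕ} (hk : k < d) :
    ∑ i ∈ range (d + 1), γ i * z (k + 1 - i) = 0 := by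
  set Q : ℕ → ℝ := fun k ↦ gnormSq (gMatrix d a b γ) (fun i ↦ z (k - i))
  set S : ℕ → ℝ := fun k ↦ ∑ i ∈ range (d + 1), γ i * z (k + 1 - i)
  have step (k : ℕ) : Q k = Q (k + 1) + S k ^ 2 := by
    have := h.gnormSq_eq_add_sq (hb k)
    simpa only [Q, S, add_sub_cancel_right, Nat.cast_succ] using this
  have antitone_Q : Antitone Q :=
    antitone_nat_of_succ_le fun k ↦ by linarith [step k, sq_nonneg (S k)]
  have geometric : Q (d + 1) = η ^ 2 * Q d := by
    have scaled : (fun i : Fin d ↦ z ((d + 1 : ℕ) - i)) = η • fun i : Fin d ↦ z (d - i) := by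
      ext i
      have := hz (d - i)
      rw [Nat.cast_sub i.2.le] at this
      simpa only [Nat.cast_succ, Pi.smul_apply, smul_eq_mul, sub_add_eq_add_sub] using this
    simp only [Q, scaled, gnormSq_smul]
  have Q_d_nonneg : 0 ≤ Q d := by
    have contract : (1 - η ^ 2) * Q d = S d ^ 2 := by linarith [step d]
    have : 0 < 1 - η ^ 2 := sub_pos.mpr ((sq_lt_one_iff_abs_lt_one η).mpr hη)
    exact nonneg_of_mul_nonneg_right (contract ▸ sq_nonneg (S d)) this
  have Q_zero : Q 0 ≤ 0 := by simpa [Q] using hQ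
  have := antitone_Q (Nat.zero_le k)
  have := antitone_Q (Nat.succ_le_of_lt hk)
  exact pow_eq_zero_iff two_ne_zero |>.mp (le_antisymm (by linarith [step k]) (sq_nonneg (S k)))

/-- Triangularity: the `γ`-sum ending at `d - i` involves only `z (-i)` and later values. -/
lemma eq_zero_of_sum_eq_zero (hz : ∀ k : ℕ, z (k + 1) = η * z k)
    (hS : ∀ k : ℕ, k < d → ∑ i ∈ range (d + 1), γ i * z (k + 1 - i) = 0) (hγd : γ d ≠ 0)
    (hγη : ∑ i ∈ range (d + 1), γ i * η ^ (d - i) ≠ 0) {i : ℕ} (hi : i < d) : z (-i) = 0 := by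
  have geometric := eq_pow_mul_of_forall_succ hz
  induction i using Nat.strong_induction_on with
  | _ i ih =>
  have hSi := hS (d - i - 1) (by lia)
  rw [show ((d - i - 1 : ℕ) : ℤ) + 1 = d - i by lia] at hSi
  obtain rfl | hpos := Nat.eq_zero_or_pos i
  · have factor : ∑ j ∈ range (d + 1), γ j * z (d - (0 : ℕ) - j)
        = (∑ j ∈ range (d + 1), γ j * η ^ (d - j)) * z 0 := by
      rw [sum_mul]
      refine sum_congr rfl fun j hj ↦ ?_
      rw [mul_assoc, ← geometric, Nat.cast_sub (Nat.lt_succ_iff.mp (mem_range.mp hj)),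
        Nat.cast_zero, sub_zero]
    rw [factor] at hSi
    simpa using (mul_eq_zero.mp hSi).resolve_left hγη
  · have later_eq_zero : ∀ j ∈ range d, γ j * z (d - i - j) = 0 := by
      intro j hj
      have hj := mem_range.mp hj
      obtain hij | hij := le_total i (d - j)
      · rw [show (d : ℤ) - i - j = (d - j - i : ℕ) by lia, geometric,
          show z 0 = 0 by simpa using ih 0 hpos (by lia), mul_zero, mul_zero]
      · rw [show (d : ℤ) - i - j = -(i - (d - j) : ℕ) by lia, ih _ (by lia) (by lia), mul_zero]
    rw [sum_range_succ, sum_eq_zero later_eq_zero, zero_add, sub_right_comm, sub_self,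
      zero_sub] at hSi
    exact (mul_eq_zero.mp hSi).resolve_left hγd

theorem SpectralIdentity.posDef_gMatrix (h : SpectralIdentity d a b γ) (hη : |η| < 1)
    (hb : ∀ x : ℕ → ℝ, ∑ i ∈ range (d + 1), b i * x i = x 0 - η * x 1) (hγd : γ d ≠ 0)
    (hγη : ∑ i ∈ range (d + 1), γ i * η ^ (d - i) ≠ 0) : (gMatrix d a b γ).PosDef := by
  refine .of_dotProduct_mulVec_pos (isHermitian_gMatrix d a b γ) fun v hv ↦ ?_
  rw [star_trivial, ← gnormSq_real]
  contrapose! hv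
  let w : ℕ → ℝ := Function.extend Fin.val v 0
  let z : ℤ → ℝ := fun m ↦ η ^ m.toNat * w (-m).toNat
  have z_neg (i : ℕ) : z (-i) = w i := by simp [z]
  have w_val (i : Fin d) : w i = v i := Fin.val_injective.extend_apply v 0 i
  have z_succ (k : ℕ) : z (k + 1) = η * z k := by
    have : (-1 + -(k : ℤ)).toNat = 0 := by lia
    simp [z, pow_succ', mul_assoc, this]
  have b_vanishes (k : ℕ) : ∑ i ∈ range (d + 1), b i * z (k + 1 - i) = 0 := by
    rw [hb fun i ↦ z (k + 1 - i)]
    simp [z_succ]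
  have sums_vanish : ∀ k < d, ∑ i ∈ range (d + 1), γ i * z (k + 1 - i) = 0 := fun k hk ↦
    h.sum_eq_zero_of_gnormSq_nonpos hη z_succ b_vanishes (by simpa only [z_neg, w_val] using hv) hk
  ext i
  rw [← w_val, ← z_neg, eq_zero_of_sum_eq_zero z_succ sums_vanish hγd hγη i.2, Pi.zero_apply]

end PosDef

section UniformBounds

open scoped ComplexOrder in
theorem exists_eigenvalues_mem_Icc_of_isCompact {𝕜 n : Type*} [RCLike 𝕜] [Fintype n]
    [DecidableEq n] {𝒢 : Set (Matrix n n 𝕜)} (h𝒢 : IsCompact 𝒢) (hpos : ∀ G ∈ 𝒢, G.PosDef) :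
    ∃ c C : ℝ, 0 < c ∧ c ≤ C ∧
      ∀ G ∈ 𝒢, ∀ hG : G.IsHermitian, ∀ i, hG.eigenvalues i ∈ Set.Icc c C := by
  let form (p : Matrix n n 𝕜 × (n → 𝕜)) : ℝ := RCLike.re (star p.2 ⬝ᵥ p.1.mulVec p.2)
  have continuous_form : Continuous form := by
    simp only [form, dotProduct, Matrix.mulVec]
    fun_prop
  let sphere : Set (n → 𝕜) := WithLp.ofLp '' Metric.sphere (0 : EuclideanSpace 𝕜 n) 1
  have isCompact_sphere : IsCompact sphere :=
    (isCompact_sphere 0 1).image (PiLp.continuous_ofLp 2 _)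
  have form_pos : ∀ p ∈ 𝒢 ×ˢ sphere, 0 < form p := by
    rintro ⟨G, _⟩ ⟨hG, v, hv, rfl⟩
    have v_ne_zero : v ≠ 0 := ne_zero_of_mem_unit_sphere ⟨v, hv⟩
    exact (hpos G hG).re_dotProduct_pos fun h ↦ v_ne_zero (WithLp.ofLp_injective 2 h)
  have eigenvector_mem {G : Matrix n n 𝕜} (hG : G.IsHermitian) (i : n) :
      (hG.eigenvectorBasis i).ofLp ∈ sphere :=
    ⟨_, mem_sphere_zero_iff_norm.mpr (hG.eigenvectorBasis.orthonormal.1 i), rfl⟩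
  obtain ⟨c, c_pos, hc⟩ :=
    (h𝒢.prod isCompact_sphere).exists_forall_le' continuous_form.continuousOn form_pos
  obtain ⟨C, hC⟩ := (h𝒢.prod isCompact_sphere).bddAbove_image continuous_form.continuousOn
  refine ⟨c, max c C, c_pos, le_max_left c C, fun G hG hG' i ↦ ?_⟩
  have mem : (G, (hG'.eigenvectorBasis i).ofLp) ∈ 𝒢 ×ˢ sphere := ⟨hG, eigenvector_mem hG' i⟩
  have eigenvalue_eq : hG'.eigenvalues i = form (G, (hG'.eigenvectorBasis i).ofLp) :=
    hG'.eigenvalues_eq i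
  have upper := hC (Set.mem_image_of_mem form mem)
  rw [← eigenvalue_eq] at upper
  exact ⟨(hc _ mem).trans_eq eigenvalue_eq.symm, upper.trans (le_max_right c C)⟩

variable {T : Type*} [TopologicalSpace T]

lemma continuous_spectralResidual {a γ : T → ℕ → ℝ} (ha : Continuous a) (hγ : Continuous γ)
    (b : ℕ → ℝ) (i j : ℕ) : Continuous fun t ↦ spectralResidual (a t) b (γ t) i j := by
  unfold spectralResidual
  fun_prop

lemma SpectralIdentity.sum_sq_eq (h : SpectralIdentity d a b γ) :
    ∑ i ∈ range (d + 1), γ i ^ 2 = ∑ i ∈ range (d + 1), a i * b i := by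
  have diagonal := (diagSum_add_right (spectralResidual a b γ) d 0).symm.trans (h d le_rfl)
  simp only [spectralResidual, add_zero, sum_sub_distrib] at diagonal
  rw [← sub_eq_zero, ← neg_eq_zero, neg_sub, ← diagonal]
  congr 1 <;> exact sum_congr rfl fun i _ ↦ by ring

/-- The `γ` are confined to a compact set because `∑ γ i ^ 2 = ∑ a i * b i`. -/
theorem exists_eigenvalues_gMatrix_mem_Icc {K : Set T} (hK : IsCompact K) {a : T → ℕ → ℝ}
    (ha : Continuous a) (d : ℕ) {b : ℕ → ℝ} {η κ : ℝ} (hη : |η| < 1) (hκ : 0 < κ)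
    (hb : ∀ x : ℕ → ℝ, ∑ i ∈ range (d + 1), b i * x i = x 0 - η * x 1) :
    ∃ c C : ℝ, 0 < c ∧ c ≤ C ∧ ∀ t ∈ K, ∀ γ : ℕ → ℝ, SpectralIdentity d (a t) b γ →
      (∀ i, d < i → γ i = 0) → κ ≤ |γ d| → κ ≤ |∑ i ∈ range (d + 1), γ i * η ^ (d - i)| →
      (gMatrix d (a t) b γ).PosDef ∧
        ∀ i, (isHermitian_gMatrix d (a t) b γ).eigenvalues i ∈ Set.Icc c C := by
  obtain ⟨B, hB⟩ := hK.bddAbove_image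
    (f := fun t ↦ ∑ i ∈ range (d + 1), a t i * b i) (by fun_prop)
  let admissible : Set (T × (ℕ → ℝ)) := {p | SpectralIdentity d (a p.1) b p.2 ∧
    (∀ i, d < i → p.2 i = 0) ∧ κ ≤ |p.2 d| ∧ κ ≤ |∑ i ∈ range (d + 1), p.2 i * η ^ (d - i)|}
  let box : Set (T × (ℕ → ℝ)) := K ×ˢ Set.univ.pi fun _ ↦ Set.Icc (-√B) √B
  have continuous_G (i j : ℕ) :
      Continuous fun p : T × (ℕ → ℝ) ↦ diagSum (spectralResidual (a p.1) b p.2) i j :=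
    continuous_diagSum (continuous_spectralResidual (by fun_prop) (by fun_prop) b) i j
  have continuous_gMatrix : Continuous fun p : T × (ℕ → ℝ) ↦ gMatrix d (a p.1) b p.2 :=
    continuous_matrix fun i j ↦ continuous_G i j
  have isClosed_admissible : IsClosed admissible := by
    simp only [admissible, SpectralIdentity, Set.ofPred_and, Set.ofPred_forall]
    refine .inter ?_ (.inter ?_ (.inter ?_ ?_))
    · exact isClosed_iInter fun n ↦ isClosed_iInter fun _ ↦
        isClosed_eq (continuous_G n d) continuous_const
    · exact isClosed_iInter fun i ↦ isClosed_iInter fun _ ↦ isClosed_eq (by fun_prop) (by fun_prop)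
    · exact isClosed_le (by fun_prop) (by fun_prop)
    · exact isClosed_le (by fun_prop) (by fun_prop)
  have isCompact_box : IsCompact box := hK.prod (isCompact_univ_pi fun _ ↦ isCompact_Icc)
  have posDef : ∀ p ∈ admissible, (gMatrix d (a p.1) b p.2).PosDef := fun p hp ↦
    hp.1.posDef_gMatrix hη hb (abs_pos.mp (hκ.trans_le hp.2.2.1))
      (abs_pos.mp (hκ.trans_le hp.2.2.2))
  obtain ⟨c, C, c_pos, hcC, bounds⟩ := exists_eigenvalues_mem_Icc_of_isCompact
    ((isCompact_box.inter_right isClosed_admissible).image continuous_gMatrix)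
    (Set.forall_mem_image.mpr fun p hp ↦ posDef p hp.2)
  refine ⟨c, C, c_pos, hcC, fun t ht γ h supp hd hη ↦ ?_⟩
  have mem : (t, γ) ∈ admissible := ⟨h, supp, hd, hη⟩
  have mem_Icc (i : ℕ) : γ i ∈ Set.Icc (-√B) √B := by
    rw [Set.mem_Icc, ← abs_le]
    obtain hi | hi := lt_or_ge d i
    · simp [supp i hi]
    · refine Real.abs_le_sqrt (le_trans ?_ (hB (Set.mem_image_of_mem _ ht)))
      rw [← h.sum_sq_eq]
      exact single_le_sum (f := fun i ↦ γ i ^ 2) (fun i _ ↦ sq_nonneg (γ i)) (by simp; lia)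
  exact ⟨posDef _ mem, bounds _ (Set.mem_image_of_mem _ ⟨⟨ht, fun i _ ↦ mem_Icc i⟩, mem⟩) _⟩

end UniformBounds

end GMatrix

section SpectralFactorization

open Polynomial

section RootBounds

variable {K : Type*} [NormedField K] {p : K[X]} {r : ℝ}

lemma norm_eval_le_of_forall_mem_roots (hs : p.Splits) (hm : p.Monic)
    (hr : ∀ w ∈ p.roots, ‖w‖ ≤ r) (z : K) : ‖p.eval z‖ ≤ (‖z‖ + r) ^ p.natDegree := by
  rw [hs.eval_eq_prod_roots_of_monic hm, hs.natDegree_eq_card_roots]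
  generalize p.roots = s at hr
  induction s using Multiset.induction_on with
  | empty => simp
  | cons w s ih =>
    obtain ⟨hw, hr⟩ := Multiset.forall_mem_cons.mp hr
    rw [Multiset.map_cons, Multiset.prod_cons, Multiset.card_cons, norm_mul, pow_succ']
    have head : ‖z - w‖ ≤ ‖z‖ + r := (norm_sub_le z w).trans (by gcongr)
    exact mul_le_mul head (ih hr) (norm_nonneg _) ((norm_nonneg _).trans head)

lemma le_norm_eval_of_forall_mem_roots (hs : p.Splits) (hm : p.Monic)
    (hr : ∀ w ∈ p.roots, ‖w‖ ≤ r) {z : K} (hz : r ≤ ‖z‖) :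
    (‖z‖ - r) ^ p.natDegree ≤ ‖p.eval z‖ := by
  rw [hs.eval_eq_prod_roots_of_monic hm, hs.natDegree_eq_card_roots]
  generalize p.roots = s at hr
  induction s using Multiset.induction_on with
  | empty => simp
  | cons w s ih =>
    obtain ⟨hw, hr⟩ := Multiset.forall_mem_cons.mp hr
    rw [Multiset.map_cons, Multiset.prod_cons, Multiset.card_cons, norm_mul, pow_succ']
    have := norm_sub_norm_le z w
    have := sub_nonneg.mpr hz
    gcongr
    · linarith
    · exact ih hr

end RootBounds

section Quadratic

open ComplexConjugate

lemma aeval_quadratic (x v : ℂ) :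
    aeval v (X ^ 2 - C (2 * x.re) * X + C (‖x‖ ^ 2) : ℝ[X]) = (v - x) * (v - conj x) := by
  have sum := Complex.add_conj x
  have prod := Complex.mul_conj' x
  simp only [map_add, map_sub, map_mul, map_pow, aeval_X, aeval_C, Complex.coe_algebraMap]
  push_cast at sum ⊢
  linear_combination v * sum - prod

lemma ofReal_eval_quadratic (x : ℂ) (t : ℝ) :
    (((X ^ 2 - C (2 * x.re) * X + C (‖x‖ ^ 2)).eval t : ℝ) : ℂ) = (t - x) * (t - conj x) := by
  rw [← aeval_quadratic, ← Complex.coe_algebraMap, aeval_algebraMap_apply_eq_algebraMap_eval]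

lemma eval_quadratic_nonneg (x : ℂ) (t : ℝ) :
    0 ≤ (X ^ 2 - C (2 * x.re) * X + C (‖x‖ ^ 2)).eval t := by
  have h := ofReal_eval_quadratic x t
  rw [show (t : ℂ) - conj x = conj (t - x) by simp, Complex.mul_conj] at h
  exact (Complex.ofReal_injective h).symm ▸ Complex.normSq_nonneg _

lemma natDegree_quadratic (b c : ℝ) : (X ^ 2 - C b * X + C c).natDegree = 2 := by
  compute_degree!

end Quadratic

/-- `A * h(z) * h(z⁻¹)` is the spectral (Fejér–Riesz) factorization of the Laurent polynomial
`q((z + z⁻¹) / 2)`, normalized so that `h` is monic with all its roots in the closed unit disc. -/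
structure IsSpectralFactor (A : ℝ) (h q : ℝ[X]) : Prop where
  pos : 0 < A
  monic : h.Monic
  norm_le_one : ∀ w : ℂ, aeval w h = 0 → ‖w‖ ≤ 1
  eval_eq : ∀ z : ℝ, z ≠ 0 → q.eval ((z + z⁻¹) / 2) = A * (h.eval z * h.eval z⁻¹)

namespace IsSpectralFactor

open ComplexConjugate

variable {A B : ℝ} {h k p q : ℝ[X]}

lemma mul (hp : IsSpectralFactor A h p) (hq : IsSpectralFactor B k q) :
    IsSpectralFactor (A * B) (h * k) (p * q) where
  pos := mul_pos hp.pos hq.pos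
  monic := hp.monic.mul hq.monic
  norm_le_one w hw := by
    rw [map_mul, mul_eq_zero] at hw
    exact hw.elim (hp.norm_le_one w) (hq.norm_le_one w)
  eval_eq z hz := by
    rw [eval_mul, hp.eval_eq z hz, hq.eval_eq z hz, eval_mul, eval_mul]
    ring

lemma of_const {a : ℝ} (ha : 0 < a) (n : ℕ) : IsSpectralFactor a (X ^ n) (C a) where
  pos := ha
  monic := monic_X_pow n
  norm_le_one w hw := by
    rw [map_pow, aeval_X] at hw
    simp [eq_zero_of_pow_eq_zero hw]
  eval_eq z hz := by simp [hz]

lemma of_linear {r w : ℝ} (hr : r ≠ 0) (hw1 : |w| ≤ 1) (hw : w ^ 2 + 1 = 2 * r * w) :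
    IsSpectralFactor (w ^ 2 + 1)⁻¹ (X - C w) (1 - C r⁻¹ * X) where
  pos := by positivity
  monic := monic_X_sub_C w
  norm_le_one v hv := by
    rw [map_sub, aeval_X, aeval_C, sub_eq_zero] at hv
    simpa [hv] using hw1
  eval_eq z hz := by
    have : w ≠ 0 := by rintro rfl; norm_num at hw
    simp only [eval_sub, eval_one, eval_mul, eval_C, eval_X]
    rw [hw]
    field_simp
    linear_combination -z * hw

lemma of_quadratic {x w : ℂ} (hw1 : ‖w‖ ≤ 1) (hw : w ^ 2 + 1 = 2 * x * w) :
    IsSpectralFactor (4 * ‖w‖ ^ 2)⁻¹ (X ^ 2 - C (2 * w.re) * X + C (‖w‖ ^ 2))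
      (X ^ 2 - C (2 * x.re) * X + C (‖x‖ ^ 2)) where
  pos := by
    have : w ≠ 0 := by rintro rfl; norm_num at hw
    positivity
  monic := by monicity!
  norm_le_one v hv := by
    rw [aeval_quadratic, mul_eq_zero, sub_eq_zero, sub_eq_zero] at hv
    obtain rfl | rfl := hv
    · exact hw1
    · rwa [RCLike.norm_conj]
  eval_eq z hz := by
    have w_ne_zero : w ≠ 0 := by rintro rfl; norm_num at hw
    have z_ne_zero : (z : ℂ) ≠ 0 := Complex.ofReal_ne_zero.mpr hz
    have factor {x w : ℂ} (hw : w ^ 2 + 1 = 2 * x * w) :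
        (z - w) * ((z : ℂ)⁻¹ - w) = -2 * w * ((z + (z : ℂ)⁻¹) / 2 - x) := by
      field_simp
      linear_combination z * hw
    have hw_conj := congrArg conj hw
    simp only [map_add, map_mul, map_pow, map_one, map_ofNat] at hw_conj
    apply Complex.ofReal_injective
    rw [Complex.ofReal_mul, Complex.ofReal_mul]
    simp only [ofReal_eval_quadratic]
    push_cast
    rw [← Complex.mul_conj']
    have := (_root_.map_ne_zero conj).mpr w_ne_zero
    rw [mul_mul_mul_comm (_ - w), factor hw, factor hw_conj]
    field_simp
    ring

end IsSpectralFactor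

lemma exists_joukowski_of_sq_eq {K : Type*} [NormedField K] {x s : K} (hs : s ^ 2 = x ^ 2 - 1) :
    ∃ w : K, ‖w‖ ≤ 1 ∧ w ^ 2 + 1 = 2 * x * w := by
  have prod_eq_one : ‖x + s‖ * ‖x - s‖ = 1 := by
    rw [← norm_mul, ← norm_one (α := K)]
    congr 1
    linear_combination -hs
  obtain h | h := le_total ‖x + s‖ 1
  · exact ⟨x + s, h, by linear_combination hs⟩
  · refine ⟨x - s, ?_, by linear_combination hs⟩
    rw [← prod_eq_one]
    exact le_mul_of_one_le_left (norm_nonneg _) h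

section Nonneg

open Topology

variable {U : Set ℝ} {p q : ℝ[X]}

lemma eval_nonneg_of_mul_nonneg (hU : IsOpen U) (hp0 : p ≠ 0) (hp : ∀ t ∈ U, 0 ≤ p.eval t)
    (hpq : ∀ t ∈ U, 0 ≤ (p * q).eval t) : ∀ t ∈ U, 0 ≤ q.eval t := by
  intro t ht
  contrapose! hp0
  have p_vanishes : ∀ᶠ s in 𝓝 t, p.IsRoot s := by
    filter_upwards [hU.mem_nhds ht, q.continuous.continuousAt.eventually_lt_const hp0]
      with s hs hqs
    have := hpq s hs
    rw [eval_mul] at this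
    exact le_antisymm (nonpos_of_mul_nonneg_left this hqs) (hp s hs)
  exact eq_zero_of_infinite_isRoot p (infinite_of_mem_nhds t p_vanishes)

lemma sq_dvd_of_eval_nonneg (hU : IsOpen U) (hq : ∀ t ∈ U, 0 ≤ q.eval t) {r : ℝ} (hr : r ∈ U)
    (hroot : q.IsRoot r) : (X - C r) ^ 2 ∣ q := by
  obtain rfl | hq0 := eq_or_ne q 0
  · exact dvd_zero _
  have isLocalMin : IsLocalMin (fun t ↦ q.eval t) r := by
    filter_upwards [hU.mem_nhds hr] with t ht
    exact hroot.eq_zero.trans_le (hq t ht)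
  have derivative_root : q.derivative.IsRoot r := by
    rw [IsRoot.def, ← q.deriv]
    exact isLocalMin.deriv_eq_zero
  exact (le_rootMultiplicity_iff hq0).mp
    ((one_lt_rootMultiplicity_iff_isRoot hq0).mpr ⟨hroot, derivative_root⟩)

end Nonneg

lemma isRoot_of_aeval_ofReal {q : ℝ[X]} {r : ℝ} (h : aeval (r : ℂ) q = 0) : q.IsRoot r := by
  rw [← Complex.coe_algebraMap, aeval_algebraMap_apply_eq_algebraMap_eval] at h
  exact (FaithfulSMul.algebraMap_eq_zero_iff ℝ ℂ).mp h

lemma quadratic_dvd_of_eval_nonneg {q : ℝ[X]} (hq : ∀ t ∈ Set.Ioo (-1) 1, 0 ≤ q.eval t) {x : ℂ}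
    (hroot : aeval x q = 0) (hx : x.im = 0 → |x.re| < 1) :
    X ^ 2 - C (2 * x.re) * X + C (‖x‖ ^ 2) ∣ q := by
  obtain him | him := ne_or_eq x.im 0
  · exact quadratic_dvd_of_aeval_eq_zero_im_ne_zero q hroot him
  · lift x to ℝ using him with r
    convert sq_dvd_of_eval_nonneg isOpen_Ioo hq (abs_lt.mp (hx rfl))
      (isRoot_of_aeval_ofReal hroot) using 1
    rw [Complex.norm_real, Real.norm_eq_abs, sq_abs, Complex.ofReal_re, C_mul, C_pow, C_ofNat]
    ring

lemma exists_isSpectralFactor_dvd {q : ℝ[X]} (hdeg : q.natDegree ≠ 0)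
    (hq : ∀ t ∈ Set.Ioo (-1) 1, 0 ≤ q.eval t) :
    ∃ A h p, IsSpectralFactor A h p ∧ h.natDegree = p.natDegree ∧ p.natDegree ≠ 0 ∧ p ∣ q ∧
      ∀ t ∈ Set.Ioo (-1) 1, 0 ≤ p.eval t := by
  obtain ⟨x, hx⟩ := IsAlgClosed.exists_aeval_eq_zero ℂ q
    (degree_ne_of_natDegree_ne (n := 0) hdeg)
  by_cases hquad : x.im = 0 → |x.re| < 1
  · obtain ⟨s, hs⟩ := IsAlgClosed.exists_pow_nat_eq (x ^ 2 - 1) two_pos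
    obtain ⟨w, hw1, hw⟩ := exists_joukowski_of_sq_eq hs
    refine ⟨_, _, _, .of_quadratic hw1 hw, ?_, ?_, quadratic_dvd_of_eval_nonneg hq hx hquad, ?_⟩
    · rw [natDegree_quadratic, natDegree_quadratic]
    · rw [natDegree_quadratic]
      exact two_ne_zero
    · exact fun t _ ↦ eval_quadratic_nonneg x t
  · push Not at hquad
    obtain ⟨him, hr⟩ := hquad
    lift x to ℝ using him with r
    rw [Complex.ofReal_re] at hr
    have isRoot := isRoot_of_aeval_ofReal hx
    have r_ne_zero : r ≠ 0 := abs_pos.mp (one_pos.trans_le hr)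
    have discr_nonneg : 0 ≤ r ^ 2 - 1 := sub_nonneg.mpr (one_le_sq_iff_one_le_abs r |>.mpr hr)
    obtain ⟨w, hw1, hw⟩ := exists_joukowski_of_sq_eq (Real.sq_sqrt discr_nonneg)
    have normalize : C (-r) * (1 - C r⁻¹ * X) = X - C r := by
      rw [mul_sub, ← mul_assoc, ← C_mul, neg_mul, mul_inv_cancel₀ r_ne_zero]
      simp only [C_neg, C_1]
      ring
    have degree : (1 - C r⁻¹ * X).natDegree = 1 := by
      rw [← natDegree_X_sub_C r, ← normalize, natDegree_C_mul (neg_ne_zero.mpr r_ne_zero)]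
    refine ⟨_, _, _, .of_linear r_ne_zero hw1 hw, ?_, ?_, ?_, ?_⟩
    · rw [degree, natDegree_X_sub_C]
    · rw [degree]
      exact one_ne_zero
    · exact (Dvd.intro_left _ normalize).trans (dvd_iff_isRoot.mpr isRoot)
    · intro t ht
      have : |r⁻¹ * t| ≤ 1 := by
        rw [abs_mul, abs_inv]
        exact mul_le_one₀ (inv_le_one_of_one_le₀ hr) (abs_nonneg t) (abs_lt.mpr ht).le
      simpa using (le_abs_self _).trans this

/-- The Fejér–Riesz theorem for even trigonometric polynomials. Each root `x` of `q` is traded for a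
solution `w` of `(w + w⁻¹) / 2 = x` in the closed unit disc. -/
theorem exists_isSpectralFactor {q : ℝ[X]} (hq0 : q ≠ 0) {n : ℕ} (hn : q.natDegree ≤ n)
    (hq : ∀ t ∈ Set.Ioo (-1) 1, 0 ≤ q.eval t) :
    ∃ A h, IsSpectralFactor A h q ∧ h.natDegree = n := by
  induction n using Nat.strong_induction_on generalizing q with
  | _ n ih =>
  obtain hdeg | hdeg := eq_or_ne q.natDegree 0
  · obtain ⟨a, rfl⟩ := natDegree_eq_zero.mp hdeg
    have a_nonneg : 0 ≤ a := by simpa using hq 0 (by norm_num)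
    exact ⟨a, X ^ n, .of_const (a_nonneg.lt_of_ne' (C_ne_zero.mp hq0)) n, natDegree_X_pow n⟩
  · obtain ⟨A, h, p, hp, hdegp, hp0, ⟨r, rfl⟩, p_nonneg⟩ := exists_isSpectralFactor_dvd hdeg hq
    have p_ne_zero := left_ne_zero_of_mul hq0
    have r_ne_zero := right_ne_zero_of_mul hq0
    have degree := natDegree_mul p_ne_zero r_ne_zero
    obtain ⟨B, k, hk, hdegk⟩ := ih (n - p.natDegree) (by lia) r_ne_zero (by lia)
      (eval_nonneg_of_mul_nonneg isOpen_Ioo p_ne_zero p_nonneg hq)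
    exact ⟨A * B, h * k, hp.mul hk, by rw [hp.monic.natDegree_mul hk.monic]; lia⟩

namespace IsSpectralFactor

variable {A : ℝ} {h q : ℝ[X]} (hf : IsSpectralFactor A h q)
include hf

lemma norm_le_one_of_mem_roots_map : ∀ w ∈ (h.map (algebraMap ℝ ℂ)).roots, ‖w‖ ≤ 1 := by
  intro w hw
  rw [mem_roots_map hf.monic.ne_zero] at hw
  exact hf.norm_le_one w hw

lemma abs_eval_le (t : ℝ) : |h.eval t| ≤ (|t| + 1) ^ h.natDegree := by
  have := norm_eval_le_of_forall_mem_roots (IsAlgClosed.splits _)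
    (hf.monic.map (algebraMap ℝ ℂ)) hf.norm_le_one_of_mem_roots_map (algebraMap ℝ ℂ t)
  simpa only [eval_map_apply, norm_algebraMap', Real.norm_eq_abs, hf.monic.natDegree_map] using this

lemma le_abs_eval {t : ℝ} (ht : 1 ≤ |t|) : (|t| - 1) ^ h.natDegree ≤ |h.eval t| := by
  have := le_norm_eval_of_forall_mem_roots (IsAlgClosed.splits _)
    (hf.monic.map (algebraMap ℝ ℂ)) hf.norm_le_one_of_mem_roots_map (z := algebraMap ℝ ℂ t)
    (by rwa [norm_algebraMap'])
  simpa only [eval_map_apply, norm_algebraMap', Real.norm_eq_abs, hf.monic.natDegree_map] using this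

lemma abs_eval_joukowski_le {z : ℝ} (hz : z ≠ 0) :
    |q.eval ((z + z⁻¹) / 2)| ≤ A * ((|z| + 1) * (|z⁻¹| + 1)) ^ h.natDegree := by
  rw [hf.eval_eq z hz, abs_mul, abs_mul, abs_of_pos hf.pos, mul_pow]
  have := hf.pos.le
  gcongr <;> exact hf.abs_eval_le _

end IsSpectralFactor

end SpectralFactorization

section GStability

open Finset Polynomial

lemma spectralIdentity_of_eval {a b γ : ℝ[X]} {d : ℕ} (ha : a.natDegree ≤ d)
    (hb : b.natDegree ≤ d) (hγ : γ.natDegree ≤ d)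
    (h : ∀ z : ℝ, z ≠ 0 →
      a.eval z * b.eval z⁻¹ + b.eval z * a.eval z⁻¹ = 2 * (γ.eval z * γ.eval z⁻¹)) :
    SpectralIdentity d a.coeff b.coeff γ.coeff := by
  have polynomial_identity :
      a * reflect d b + b * reflect d a = C 2 * (γ * reflect d γ) := by
    refine eq_of_infinite_eval_eq _ _ ((Set.infinite_of_finite_compl ?_).mono
      (s := {0}ᶜ) fun z (hz : z ≠ 0) ↦ ?_)
    · simp
    · simp only [Set.mem_ofPred_eq, eval_add, eval_mul, eval_C, eval_reflect ha hz,
        eval_reflect hb hz, eval_reflect hγ hz]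
      linear_combination z ^ d * h z hz
  intro n hn
  have coeff_identity := congrArg (coeff · n) polynomial_identity
  simp only [coeff_add, coeff_C_mul, coeff_mul_reflect _ _ hn] at coeff_identity
  obtain ⟨m, rfl⟩ := Nat.exists_eq_add_of_le hn
  simp only [diagSum_add_right, spectralResidual, sum_sub_distrib, ← sum_div,
    sum_add_distrib] at coeff_identity ⊢
  rw [coeff_identity]
  ring

lemma exists_spectralIdentity {a b q : ℝ[X]} {d : ℕ} (ha : a.natDegree ≤ d)
    (hb : b.natDegree ≤ d) (hq : q.natDegree ≤ d) (hq0 : q ≠ 0)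
    (q_nonneg : ∀ t ∈ Set.Ioo (-1) 1, 0 ≤ q.eval t)
    (hab : ∀ z : ℝ, z ≠ 0 →
      a.eval z * b.eval z⁻¹ + b.eval z * a.eval z⁻¹ = 2 * q.eval ((z + z⁻¹) / 2)) :
    ∃ A h, IsSpectralFactor A h q ∧ h.natDegree = d ∧
      SpectralIdentity d a.coeff b.coeff (C √A * h).coeff := by
  obtain ⟨A, h, hf, hdeg⟩ := exists_isSpectralFactor hq0 hq q_nonneg
  refine ⟨A, h, hf, hdeg, spectralIdentity_of_eval ha hb ?_ fun z hz ↦ ?_⟩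
  · exact (natDegree_C_mul_le _ _).trans hdeg.le
  · rw [hab z hz, hf.eval_eq z hz, eval_mul, eval_mul, eval_C, eval_C, mul_mul_mul_comm,
      Real.mul_self_sqrt hf.pos.le]

lemma IsSpectralFactor.one_sub_abs_pow_le {A : ℝ} {h q : ℝ[X]}
    (hf : IsSpectralFactor A h q) {η : ℝ} (hη0 : η ≠ 0) (hη : |η| < 1) :
    (1 - |η|) ^ h.natDegree
      ≤ |∑ i ∈ range (h.natDegree + 1), h.coeff i * η ^ (h.natDegree - i)| := by
  have reversed : ∑ i ∈ range (h.natDegree + 1), h.coeff i * η ^ (h.natDegree - i)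
      = η ^ h.natDegree * h.eval η⁻¹ := by
    rw [eval_eq_sum_range, mul_sum]
    refine sum_congr rfl fun i hi ↦ ?_
    rw [inv_pow, pow_sub₀ η hη0 (Nat.lt_succ_iff.mp (mem_range.mp hi))]
    ring
  have abs_pos : 0 < |η| := abs_pos.mpr hη0
  have one_le : 1 ≤ |η⁻¹| := by
    rw [abs_inv]
    exact (one_le_inv₀ abs_pos).mpr hη.le
  calc (1 - |η|) ^ h.natDegree = |η| ^ h.natDegree * (|η⁻¹| - 1) ^ h.natDegree := by
        rw [← mul_pow, mul_sub, abs_inv, mul_inv_cancel₀ abs_pos.ne', mul_one]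
    _ ≤ |η| ^ h.natDegree * |h.eval η⁻¹| := by gcongr; exact hf.le_abs_eval one_le
    _ = _ := by rw [reversed, abs_mul, abs_pow]

lemma natDegree_one_sub_C_mul_X_le {R : Type*} [Ring R] (η : R) :
    (1 - C η * X).natDegree ≤ 1 := by
  compute_degree

lemma sum_range_coeff_one_sub_C_mul_X_mul {R : Type*} [Ring R] {d : ℕ} (hd : d ≠ 0) (η : R)
    (x : ℕ → R) :
    ∑ i ∈ range (d + 1), (1 - C η * X).coeff i * x i = x 0 - η * x 1 := by
  simp only [coeff_sub, coeff_one, coeff_C_mul, coeff_X, sub_mul, sum_sub_distrib]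
  simp [hd]

theorem exists_uniform_gMatrix {T : Type*} [TopologicalSpace T] {K : Set T} (hK : IsCompact K)
    {a q : T → ℝ[X]} (ha : Continuous fun t ↦ (a t).coeff) {d : ℕ} (hd : d ≠ 0) {η z₀ ε : ℝ}
    (hη0 : η ≠ 0) (hη : |η| < 1) (hz₀ : z₀ ≠ 0) (hε : 0 < ε)
    (ha_deg : ∀ t ∈ K, (a t).natDegree ≤ d) (hq_deg : ∀ t ∈ K, (q t).natDegree ≤ d)
    (q_nonneg : ∀ t ∈ K, ∀ x ∈ Set.Ioo (-1) 1, 0 ≤ (q t).eval x)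
    (hqε : ∀ t ∈ K, ε ≤ |(q t).eval ((z₀ + z₀⁻¹) / 2)|)
    (haq : ∀ t ∈ K, ∀ z : ℝ, z ≠ 0 →
      (a t).eval z * (1 - C η * X).eval z⁻¹ + (1 - C η * X).eval z * (a t).eval z⁻¹
        = 2 * (q t).eval ((z + z⁻¹) / 2)) :
    ∃ c₁ c₂ : ℝ, 0 < c₁ ∧ c₁ ≤ c₂ ∧ ∀ t ∈ K, ∃ γ : ℕ → ℝ,
      SpectralIdentity d (a t).coeff (1 - C η * X).coeff γ ∧
      (gMatrix d (a t).coeff (1 - C η * X).coeff γ).PosDef ∧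
        ∀ i, (isHermitian_gMatrix d (a t).coeff (1 - C η * X).coeff γ).eigenvalues i
          ∈ Set.Icc c₁ c₂ := by
  have one_sub_pos : 0 < 1 - |η| := sub_pos.mpr hη
  have one_sub_pow_le : (1 - |η|) ^ d ≤ 1 :=
    pow_le_one₀ one_sub_pos.le (sub_le_self 1 (abs_nonneg η))
  set α := ε / ((|z₀| + 1) * (|z₀⁻¹| + 1)) ^ d
  have α_pos : 0 < α := by positivity
  obtain ⟨c₁, c₂, c₁_pos, hc, bounds⟩ := exists_eigenvalues_gMatrix_mem_Icc hK ha d hη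
    (κ := √α * (1 - |η|) ^ d) (by positivity) (sum_range_coeff_one_sub_C_mul_X_mul hd η)
  refine ⟨c₁, c₂, c₁_pos, hc, fun t ht ↦ ?_⟩
  have q_ne_zero : q t ≠ 0 := fun h ↦ by simpa [h] using hε.trans_le (hqε t ht)
  have b_deg : (1 - C η * X).natDegree ≤ d :=
    (natDegree_one_sub_C_mul_X_le η).trans (Nat.one_le_iff_ne_zero.mpr hd)
  obtain ⟨A, h, hf, rfl, identity⟩ :=
    exists_spectralIdentity (ha_deg t ht) b_deg (hq_deg t ht) q_ne_zero (q_nonneg t ht) (haq t ht)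
  have sqrt_le : √α ≤ √A := by
    refine Real.sqrt_le_sqrt ((div_le_iff₀ (by positivity)).mpr ?_)
    exact (hqε t ht).trans (hf.abs_eval_joukowski_le hz₀)
  refine ⟨(C √A * h).coeff, identity, bounds t ht _ identity (fun i hi ↦ ?_) ?_ ?_⟩
  · rw [coeff_C_mul, coeff_eq_zero_of_natDegree_lt hi, mul_zero]
  · rw [coeff_C_mul, hf.monic.coeff_natDegree, mul_one, abs_of_nonneg (Real.sqrt_nonneg A)]
    exact (mul_le_of_le_one_right (Real.sqrt_nonneg α) one_sub_pow_le).trans sqrt_le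
  · simp only [coeff_C_mul, mul_assoc, ← mul_sum]
    rw [abs_mul, abs_of_nonneg (Real.sqrt_nonneg A)]
    gcongr
    exact hf.one_sub_abs_pow_le hη0 hη

end GStability

section Backshift

open Finset Polynomial

variable (R M : Type*) [CommSemiring R] [AddCommMonoid M] [Module R M]

/-- The backward shift `y ↦ yⁿ⁻¹` of two-sided sequences, on which difference operators are
polynomials. -/
def backshift : Module.End R (ℤ → M) := LinearMap.funLeft R M (· - 1)

variable {R M}

lemma backshift_apply (y : ℤ → M) (n : ℤ) : backshift R M y n = y (n - 1) := rfl

lemma backshift_pow_apply (k : ℕ) (y : ℤ → M) (n : ℤ) : (backshift R M ^ k) y n = y (n - k) := by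
  induction k generalizing n with
  | zero => simp
  | succ k ih =>
    rw [pow_succ', Module.End.mul_apply, backshift_apply, ih, Nat.cast_succ, sub_sub, add_comm]

lemma aeval_backshift_apply {p : R[X]} {d : ℕ} (hp : p.natDegree ≤ d) (y : ℤ → M) (n : ℤ) :
    aeval (backshift R M) p y n = ∑ i ∈ range (d + 1), p.coeff i • y (n - i) := by
  rw [aeval_eq_sum_range' (Nat.lt_succ_of_le hp), LinearMap.sum_apply, Finset.sum_apply]
  exact sum_congr rfl fun i _ ↦ congrArg (p.coeff i • ·) (backshift_pow_apply i y n)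

theorem SpectralIdentity.inner_aeval_backshift_eq {X : Type*} [NormedAddCommGroup X]
    [InnerProductSpace ℝ X] {d : ℕ} {a b : ℝ[X]} {γ : ℕ → ℝ}
    (h : SpectralIdentity d a.coeff b.coeff γ) (ha : a.natDegree ≤ d) (hb : b.natDegree ≤ d)
    (y : ℤ → X) (n : ℤ) :
    ⟪aeval (backshift ℝ X) a y n, aeval (backshift ℝ X) b y n⟫
      = gnormSq (gMatrix d a.coeff b.coeff γ) (fun i ↦ y (n - i))
        - gnormSq (gMatrix d a.coeff b.coeff γ) (fun i ↦ y (n - 1 - i))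
        + ‖∑ i ∈ range (d + 1), γ i • y (n - i)‖ ^ 2 := by
  rw [aeval_backshift_apply ha, aeval_backshift_apply hb, h.inner_eq]

end Backshift

section BDF3

open Polynomial

/-- The symbol of the scaled BDF-3 operator: the polynomial in the backward shift that gives `D`. -/
noncomputable def bdf3Symbol : ℝ[X] :=
  C (11 / 6) - C 3 * X + C (3 / 2) * X ^ 2 - C (1 / 3) * X ^ 3

/-- The symbol of `1 + μ S`, where `S` is the discrete delay operator for `δ = 3`. -/
noncomputable def couplingSymbol (μ : ℝ) : ℝ[X] := 1 + C μ * (C 3 * X - C 3 * X ^ 2 + X ^ 3)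

/-- The polynomial in `x = cos θ` that equals `Re (a(z) b(z⁻¹))` at `z = exp (i θ)` for the symbol
`a = couplingSymbol μ * bdf3Symbol` and the multiplier `b = 1 - z / 2`. Being affine in `μ`, it is
written as the combination of its values at `μ = 0` and `μ = 1 / 7`. -/
noncomputable def bdf3RealPart (μ : ℝ) : ℝ[X] :=
  (1 - X) * (C (1 - 7 * μ) * (C (5 / 3) - C 2 * X + C (4 / 3) * X ^ 2)
    + C (7 * μ) * ((1 + X) * (C (65 / 21) - C (25 / 3) * X + C (218 / 21) * X ^ 2
      - C (128 / 21) * X ^ 3 + C (32 / 21) * X ^ 4)))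

lemma sequence_window_six {M : Type*} (y : ℤ → M) (n : ℤ) : (fun i : Fin 6 ↦ y (n - i)) =
    ![y n, y (n - 1), y (n - 2), y (n - 3), y (n - 4), y (n - 5)] := by
  ext i
  fin_cases i <;> simp

variable {M : Type*} [AddCommGroup M] [Module ℝ M] (y : ℤ → M) (n : ℤ)

lemma aeval_bdf3Symbol_apply :
    aeval (backshift ℝ M) bdf3Symbol y n
      = (11 / 6 : ℝ) • y n - (3 : ℝ) • y (n - 1) + (3 / 2 : ℝ) • y (n - 2)
        - (1 / 3 : ℝ) • y (n - 3) := by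
  simp [bdf3Symbol, backshift_apply, backshift_pow_apply, -map_div₀]

lemma aeval_couplingSymbol_apply (μ : ℝ) :
    aeval (backshift ℝ M) (couplingSymbol μ) y n
      = y n + μ • ((3 : ℝ) • y (n - 1) - (3 : ℝ) • y (n - 2) + y (n - 3)) := by
  simp [couplingSymbol, backshift_apply, backshift_pow_apply]

lemma aeval_one_sub_C_mul_X_apply (η : ℝ) :
    aeval (backshift ℝ M) (1 - C η * X) y n = y n - η • y (n - 1) := by
  simp [backshift_apply]

lemma eval_bdf3RealPart_joukowski (μ : ℝ) {z : ℝ} (hz : z ≠ 0) :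
    (couplingSymbol μ * bdf3Symbol).eval z * (1 - C (1 / 2) * X : ℝ[X]).eval z⁻¹
        + (1 - C (1 / 2) * X : ℝ[X]).eval z * (couplingSymbol μ * bdf3Symbol).eval z⁻¹
      = 2 * (bdf3RealPart μ).eval ((z + z⁻¹) / 2) := by
  simp only [couplingSymbol, bdf3Symbol, bdf3RealPart, eval_add, eval_sub, eval_mul, eval_pow,
    eval_C, eval_X, eval_one]
  field_simp
  ring

lemma eval_bdf3RealPart_nonneg {μ : ℝ} (hμ : μ ∈ Set.Icc 0 (1 / 7)) {x : ℝ}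
    (hx : x ∈ Set.Ioo (-1) 1) : 0 ≤ (bdf3RealPart μ).eval x := by
  have at_zero : 0 ≤ 5 / 3 - 2 * x + 4 / 3 * x ^ 2 := by nlinarith [sq_nonneg (x - 3 / 4)]
  have at_one_seventh :
      0 ≤ 65 / 21 - 25 / 3 * x + 218 / 21 * x ^ 2 - 128 / 21 * x ^ 3 + 32 / 21 * x ^ 4 := by
    nlinarith [sq_nonneg (x ^ 2 - 2 * x + 1), sq_nonneg (x - 47 / 52)]
  have := hμ.1
  have : 0 ≤ 1 - 7 * μ := by linarith [hμ.2]
  have : 0 ≤ 1 + x := by linarith [hx.1]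
  have : 0 ≤ 1 - x := by linarith [hx.2]
  simp only [bdf3RealPart, eval_add, eval_sub, eval_mul, eval_pow, eval_C, eval_X, eval_one]
  positivity

lemma le_abs_eval_bdf3RealPart {μ : ℝ} (hμ : μ ∈ Set.Icc 0 (1 / 7)) :
    1 / 4 ≤ |(bdf3RealPart μ).eval ((2 + 2⁻¹) / 2)| := by
  refine le_trans ?_ (neg_le_abs _)
  simp only [bdf3RealPart, eval_add, eval_sub, eval_mul, eval_pow, eval_C, eval_X, eval_one]
  linarith [hμ.1, hμ.2]

lemma continuous_coeff_couplingSymbol_mul (p : ℝ[X]) :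
    Continuous fun μ ↦ (couplingSymbol μ * p).coeff := by
  refine continuous_pi fun i ↦ ?_
  simp only [couplingSymbol, add_mul, one_mul, mul_assoc, coeff_add, coeff_C_mul]
  fun_prop

lemma natDegree_couplingSymbol_mul_le (μ : ℝ) : (couplingSymbol μ * bdf3Symbol).natDegree ≤ 6 := by
  unfold couplingSymbol bdf3Symbol
  compute_degree

lemma natDegree_bdf3RealPart_le (μ : ℝ) : (bdf3RealPart μ).natDegree ≤ 6 := by
  unfold bdf3RealPart
  compute_degree

end BDF3

/-- **The summation assumption holds for `k = δ = 3` whenever the coupling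
strength `ω ≤ 1/7`.**
There are a multiplier `η ∈ [0,1)` and constants `0 < c_G ≤ C_G` such that for every
`μ ∈ [0,1/7]` there is a symmetric positive definite `6×6` matrix `G` with all
eigenvalues in `[c_G, C_G]`, and a vector `γ = (γ0,…,γ6)`, realizing the BDF-3
telescoping identity for every sequence in every real inner product space, where
`Dyᵐ = (11/6)yᵐ - 3yᵐ⁻¹ + (3/2)yᵐ⁻² - (1/3)yᵐ⁻³`. -/
theorem summation_assumption_bdf3 :
    ∃ η : ℝ, 0 ≤ η ∧ η < 1 ∧
    ∃ cG CG : ℝ, 0 < cG ∧ cG ≤ CG ∧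
      ∀ μ ∈ Set.Icc (0 : ℝ) (1 / 7),
        ∃ (G : Matrix (Fin 6) (Fin 6) ℝ) (hG : G.IsHermitian) (γ0 γ1 γ2 γ3 γ4 γ5 γ6 : ℝ),
          G.PosDef ∧
          (∀ i, hG.eigenvalues i ∈ Set.Icc cG CG) ∧
          ∀ (X : Type) (_ : NormedAddCommGroup X) (_ : InnerProductSpace ℝ X)
            (y : ℤ → X) (n : ℤ),
            (let D : ℤ → X := fun m =>
              (11 / 6 : ℝ) • y m - (3 : ℝ) • y (m - 1)
                + (3 / 2 : ℝ) • y (m - 2) - (1 / 3 : ℝ) • y (m - 3)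
            ⟪D n + μ • ((3 : ℝ) • D (n - 1) - (3 : ℝ) • D (n - 2) + D (n - 3)),
                y n - η • y (n - 1)⟫
              = gnormSq G ![y n, y (n - 1), y (n - 2), y (n - 3), y (n - 4), y (n - 5)]
                - gnormSq G ![y (n - 1), y (n - 2), y (n - 3), y (n - 4), y (n - 5), y (n - 6)]
                + ‖γ0 • y n + γ1 • y (n - 1) + γ2 • y (n - 2) + γ3 • y (n - 3)
                    + γ4 • y (n - 4) + γ5 • y (n - 5) + γ6 • y (n - 6)‖ ^ 2) := by
  obtain ⟨c₁, c₂, c₁_pos, hc, uniform⟩ := exists_uniform_gMatrix isCompact_Icc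
    (continuous_coeff_couplingSymbol_mul bdf3Symbol) (d := 6) (by norm_num)
    (η := 1 / 2) (by norm_num) (by norm_num [abs_lt]) two_ne_zero (ε := 1 / 4) (by norm_num)
    (fun μ _ ↦ natDegree_couplingSymbol_mul_le μ) (fun μ _ ↦ natDegree_bdf3RealPart_le μ)
    (fun μ hμ x ↦ eval_bdf3RealPart_nonneg hμ) (fun μ hμ ↦ le_abs_eval_bdf3RealPart hμ)
    (fun μ _ z ↦ eval_bdf3RealPart_joukowski μ)
  refine ⟨1 / 2, by norm_num, by norm_num, c₁, c₂, c₁_pos, hc, fun μ hμ ↦ ?_⟩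
  obtain ⟨γ, identity, posDef, eigenvalues_mem⟩ := uniform μ hμ
  refine ⟨_, isHermitian_gMatrix _ _ _ _, γ 0, γ 1, γ 2, γ 3, γ 4, γ 5, γ 6, posDef,
    eigenvalues_mem, fun X _ _ y n ↦ ?_⟩
  have telescoped := identity.inner_aeval_backshift_eq (natDegree_couplingSymbol_mul_le μ)
    ((natDegree_one_sub_C_mul_X_le _).trans (by norm_num)) y n
  rw [map_mul, Module.End.mul_apply, aeval_couplingSymbol_apply, aeval_one_sub_C_mul_X_apply,
    sequence_window_six, sequence_window_six] at telescoped
  simpa [aeval_bdf3Symbol_apply, Finset.sum_range_succ, sub_sub] using telescoped
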